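/- Let k be a field with algebraic closure k̄, let m ≥ 2, and let d₁, …, d_m be positive integers. Let U = (U₁,…,U_m) and V = (V₁,…,V_m) be nonzero vectors in k^m, with supports S_U = {i : U_i ≠ 0} and S_V = {i : V_i ≠ 0}. Then there exists λ ∈ k̄* with V_i = λ^{d_i}·U_i for all 1 ≤ i ≤ m if and only if S_U = S_V and, setting S = S_U, d = gcd(d_i : i ∈ S), choosing any integers (c_i)_{i∈S} with Σ_{i∈S} c_i·d_i = d, and setting Λ = Π_{i∈S} (V_i/U_i)^{c_i} ∈ k*, one has V_i/U_i = Λ^{d_i/d} for every i ∈ S. -/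

import Mathlib

open scoped Classical

/-!
On the common support `S` the condition says that the ratios `r i = V i / U i` are `λ ^ d i` for a
single `λ`. Then `∏ r i ^ c i = λ ^ ∑ c i * d i = λ ^ d` by the Bézout relation, so `Λ` can only be
`λ ^ d`, and `r i = Λ ^ (d i / d)`. Conversely every `d`-th root `λ` of `Λ` works, and
such a root exists over an algebraically closed field.
-/

theorem natCast_finset_gcd {ι : Type*} (s : Finset ι) (d : ι → ℕ) :
    ((s.gcd d : ℕ) : ℤ) = s.gcd fun i => (d i : ℤ) := by
  induction s using Finset.cons_induction with
  | empty => simp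
  | cons a s ha ih =>
    rw [Finset.gcd_cons, Finset.gcd_cons, ← ih]
    exact Int.coe_gcd (d a) (s.gcd d : ℕ)

theorem exists_sum_mul_eq_gcd {ι : Type*} (s : Finset ι) (d : ι → ℕ) :
    ∃ c : ι → ℤ, ∑ i ∈ s, c i * (d i : ℤ) = ((s.gcd d : ℕ) : ℤ) := by
  obtain ⟨c, hc⟩ := s.gcd_eq_sum_mul fun i => (d i : ℤ)
  exact ⟨c, by simp only [natCast_finset_gcd, hc, mul_comm]⟩

section GroupWithZero

theorem eq_mul_iff_ne_zero_iff_and_div_eq {G₀ : Type*} [GroupWithZero G₀] {x u v : G₀}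
    (hx : x ≠ 0) : v = x * u ↔ (u ≠ 0 ↔ v ≠ 0) ∧ (u ≠ 0 → v / u = x) := by
  by_cases hu : u = 0
  · simp [hu]
  · simp only [ne_eq, hu, not_false_eq_true, true_iff, true_imp_iff, div_eq_iff hu]
    exact ⟨fun h => ⟨h ▸ mul_ne_zero hx hu, h⟩, And.right⟩

variable {ι G₀ : Type*} [CommGroupWithZero G₀] {x : G₀}

theorem prod_zpow_eq_zpow_sum₀ (hx : x ≠ 0) (s : Finset ι) (f : ι → ℤ) :
    ∏ i ∈ s, x ^ f i = x ^ ∑ i ∈ s, f i := by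
  induction s using Finset.cons_induction with
  | empty => simp
  | cons a s ha ih => rw [Finset.prod_cons, Finset.sum_cons, ih, zpow_add₀ hx]

variable {s : Finset ι} {d : ι → ℕ} {c : ι → ℤ} {r : ι → G₀}

theorem prod_zpow_eq_pow_gcd (hx : x ≠ 0)
    (hc : ∑ i ∈ s, c i * (d i : ℤ) = ((s.gcd d : ℕ) : ℤ)) (hr : ∀ i ∈ s, r i = x ^ d i) :
    ∏ i ∈ s, r i ^ c i = x ^ s.gcd d :=
  calc
    ∏ i ∈ s, r i ^ c i = ∏ i ∈ s, x ^ (c i * (d i : ℤ)) :=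
      Finset.prod_congr rfl fun i hi => by
        rw [hr i hi, ← zpow_natCast, ← zpow_mul, mul_comm]
    _ = x ^ s.gcd d := by rw [prod_zpow_eq_zpow_sum₀ hx, hc, zpow_natCast]

theorem eq_prod_zpow_pow_div_gcd (hx : x ≠ 0)
    (hc : ∑ i ∈ s, c i * (d i : ℤ) = ((s.gcd d : ℕ) : ℤ)) (hr : ∀ i ∈ s, r i = x ^ d i)
    {i : ι} (hi : i ∈ s) : r i = (∏ j ∈ s, r j ^ c j) ^ (d i / s.gcd d) := by
  rw [prod_zpow_eq_pow_gcd hx hc hr, ← pow_mul, Nat.mul_div_cancel' (Finset.gcd_dvd hi), hr i hi]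

end GroupWithZero

theorem exists_units_pow_eq {K : Type*} [Field K] [IsAlgClosed K] {n : ℕ} (hn : 0 < n)
    {x : K} (hx : x ≠ 0) : ∃ u : Kˣ, (u : K) ^ n = x := by
  obtain ⟨z, hz⟩ := IsAlgClosed.exists_pow_nat_eq x hn
  have hz₀ : z ≠ 0 := (pow_ne_zero_iff hn.ne').1 (hz ▸ hx)
  exact ⟨Units.mk0 z hz₀, hz⟩

section Extension

variable {ι k K : Type*} [Field k] [Field K] [Algebra k K]

theorem forall_algebraMap_eq_pow_mul_iff [Fintype ι] (d : ι → ℕ) (U V : ι → k) (lam : Kˣ) :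
    (∀ i, algebraMap k K (V i) = (lam : K) ^ d i * algebraMap k K (U i)) ↔
      (Finset.univ.filter fun i => U i ≠ 0) = (Finset.univ.filter fun i => V i ≠ 0) ∧
        ∀ i ∈ Finset.univ.filter fun i => U i ≠ 0,
          algebraMap k K (V i / U i) = (lam : K) ^ d i := by
  simp only [eq_mul_iff_ne_zero_iff_and_div_eq (pow_ne_zero _ lam.ne_zero), forall_and, map_ne_zero,
    map_div₀, Finset.ext_iff, Finset.mem_filter_univ]

variable [IsAlgClosed K] {s : Finset ι} {d : ι → ℕ} {c : ι → ℤ} {r : ι → k}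

theorem exists_units_forall_algebraMap_eq_pow_iff (hd : ∀ i ∈ s, 0 < d i)
    (hr : ∀ i ∈ s, r i ≠ 0) (hc : ∑ i ∈ s, c i * (d i : ℤ) = ((s.gcd d : ℕ) : ℤ)) :
    (∃ lam : Kˣ, ∀ i ∈ s, algebraMap k K (r i) = (lam : K) ^ d i) ↔
      ∀ i ∈ s, r i = (∏ j ∈ s, r j ^ c j) ^ (d i / s.gcd d) := by
  constructor
  · rintro ⟨lam, hlam⟩ i hi
    apply (algebraMap k K).injective
    simpa only [map_pow, map_prod, map_zpow₀] using
      eq_prod_zpow_pow_div_gcd lam.ne_zero hc hlam hi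
  · intro h
    obtain rfl | ⟨i₀, hi₀⟩ := s.eq_empty_or_nonempty
    · exact ⟨1, by simp⟩
    have hgcd : 0 < s.gcd d := Nat.pos_of_dvd_of_pos (Finset.gcd_dvd hi₀) (hd i₀ hi₀)
    have hprod : ∏ j ∈ s, r j ^ c j ≠ 0 :=
      Finset.prod_ne_zero_iff.2 fun j hj => zpow_ne_zero _ (hr j hj)
    obtain ⟨lam, hlam⟩ := exists_units_pow_eq hgcd ((map_ne_zero (algebraMap k K)).2 hprod)
    refine ⟨lam, fun i hi => ?_⟩
    rw [h i hi, map_pow, ← hlam, ← pow_mul, Nat.mul_div_cancel' (Finset.gcd_dvd hi)]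

end Extension

theorem statement9_general {ι k K : Type*} [Fintype ι] [Field k] [Field K] [Algebra k K]
    [IsAlgClosed K] (d : ι → ℕ) (hd : ∀ i, 0 < d i) (U V : ι → k) :
    (∃ lam : Kˣ, ∀ i, algebraMap k K (V i) = (lam : K) ^ d i * algebraMap k K (U i)) ↔
      ((Finset.univ.filter fun i => U i ≠ 0) = (Finset.univ.filter fun i => V i ≠ 0) ∧
        ∀ c : ι → ℤ,
          (∑ i ∈ Finset.univ.filter fun i => U i ≠ 0, c i * (d i : ℤ)) =
            (((Finset.univ.filter fun i => U i ≠ 0).gcd d : ℕ) : ℤ) →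
          ∀ i ∈ Finset.univ.filter fun i => U i ≠ 0,
            V i / U i =
              (∏ j ∈ Finset.univ.filter fun i => U i ≠ 0, (V j / U j) ^ (c j)) ^
                (d i / (Finset.univ.filter fun i => U i ≠ 0).gcd d)) := by
  simp only [forall_algebraMap_eq_pow_mul_iff, exists_and_left]
  refine and_congr_right fun hsupp => ?_
  have hratio : ∀ i ∈ Finset.univ.filter fun i => U i ≠ 0, V i / U i ≠ 0 := fun i hi =>
    have hVi : i ∈ Finset.univ.filter fun i => V i ≠ 0 := hsupp ▸ hi
    div_ne_zero (Finset.mem_filter.1 hVi).2 (Finset.mem_filter.1 hi).2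
  have hiff {c : ι → ℤ} := exists_units_forall_algebraMap_eq_pow_iff (K := K) (c := c)
    (fun i _ => hd i) hratio
  obtain ⟨c₀, hc₀⟩ := exists_sum_mul_eq_gcd (Finset.univ.filter fun i => U i ≠ 0) d
  exact ⟨fun h c hc => (hiff hc).1 h, fun h => (hiff hc₀).2 (h c₀ hc₀)⟩

/-- Equality test in a weighted projective space: for weights `d₁,…,d_m` and nonzero vectors
`U, V ∈ k^m`, there is `λ` in the algebraic closure of `k` with `V_i = λ^{d_i}·U_i` for all `i`
if and only if `U` and `V` have the same support `S` and, for any integers `(c_i)_{i∈S}` with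
`Σ c_i·d_i = d := gcd(d_i : i ∈ S)`, setting `Λ = Π_{i∈S} (V_i/U_i)^{c_i}`, one has
`V_i/U_i = Λ^{d_i/d}` for every `i ∈ S`. -/
theorem statement9 {k : Type*} [Field k] (m : ℕ) (hm : 2 ≤ m)
    (d : Fin m → ℕ) (hd : ∀ i, 0 < d i)
    (U V : Fin m → k) (hU : U ≠ 0) (hV : V ≠ 0) :
    (∃ lam : (AlgebraicClosure k)ˣ, ∀ i,
        algebraMap k (AlgebraicClosure k) (V i) =
          (lam : AlgebraicClosure k) ^ (d i) * algebraMap k (AlgebraicClosure k) (U i)) ↔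
      ((Finset.univ.filter fun i => U i ≠ 0) = (Finset.univ.filter fun i => V i ≠ 0) ∧
        ∀ c : Fin m → ℤ,
          (∑ i ∈ Finset.univ.filter fun i => U i ≠ 0, c i * (d i : ℤ)) =
            (((Finset.univ.filter fun i => U i ≠ 0).gcd d : ℕ) : ℤ) →
          ∀ i ∈ Finset.univ.filter fun i => U i ≠ 0,
            V i / U i =
              (∏ j ∈ Finset.univ.filter fun i => U i ≠ 0, (V j / U j) ^ (c j)) ^
                (d i / (Finset.univ.filter fun i => U i ≠ 0).gcd d)) :=
  statement9_general d hd U V
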